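/- Let α ∈ [0,1) be irrational and 0 < s < 2. If there exists k ∈ ℕ with k ≥ 1 such that ‖kα‖ < s²/k, where ‖x‖ denotes the distance from x to the nearest integer, then the set X(√t, α) = { √n · e^{2πi n α} : n ∈ ℕ } ⊂ ℂ is not (1/4 + π√5)·s-uniformly discrete; that is, there exist two distinct points of X(√t, α) lying in a common open ball of radius (1/4 + π√5)·s. -/

import Mathlib

/-- The Fermat-spiral point set `X(√t, α) = { √n·e^{2πi n α} : n ∈ ℕ } ⊆ ℂ`. -/
noncomputable def fermatSpiral (α : ℝ) : Set ℂ :=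
  {z : ℂ | ∃ n : ℕ, z = Real.sqrt n * Complex.exp (2 * Real.pi * Complex.I * (n * α))}

/-- `‖x‖`, the distance from the real number `x` to the nearest integer. -/
noncomputable def nearestIntDist (x : ℝ) : ℝ := |x - round x|

/-!
Write `d = ‖kα‖`. The `n`-th and `(n + k)`-th points of the spiral differ in radius by at most
`k / (2√n)` and in argument, modulo `2π`, by `2πd`, so they are at distance at most
`k / (2√n) + 2π√n d`. For `n = ⌈(k / s)²⌉` the first term is at most `s / 2`.
Since `d < s² / k` and `d ≤ 1/2`, we have `n d² ≤ (k d / s)² + d² < s² + s² / 2`, so the second is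
below `2π√(3/2) s`, which is less than `2π√5 s`.
-/

open Real

lemma norm_mul_exp_mul_I_sub_le (r₁ r₂ θ₁ θ₂ : ℝ) :
    ‖(r₁ * Complex.exp (θ₁ * Complex.I) - r₂ * Complex.exp (θ₂ * Complex.I) : ℂ)‖ ≤
      |r₁ - r₂| + |r₂| * |θ₁ - θ₂| := by
  have hexp : Complex.exp (θ₁ * Complex.I) =
      Complex.exp (θ₂ * Complex.I) * Complex.exp (Complex.I * (θ₁ - θ₂ : ℝ)) := by
    rw [← Complex.exp_add]
    congr 1
    push_cast
    ring
  have hsplit : (r₁ * Complex.exp (θ₁ * Complex.I) - r₂ * Complex.exp (θ₂ * Complex.I) : ℂ) =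
      (r₁ - r₂ : ℝ) * Complex.exp (θ₁ * Complex.I) +
        r₂ * Complex.exp (θ₂ * Complex.I) * (Complex.exp (Complex.I * (θ₁ - θ₂ : ℝ)) - 1) := by
    rw [hexp]
    push_cast
    ring
  calc _ ≤ |r₁ - r₂| + |r₂| * ‖Complex.exp (Complex.I * (θ₁ - θ₂ : ℝ)) - 1‖ := by
        rw [hsplit]
        refine (norm_add_le _ _).trans_eq ?_
        simp only [norm_mul, Complex.norm_exp_ofReal_mul_I, Complex.norm_real, norm_eq_abs, mul_one]
    _ ≤ |r₁ - r₂| + |r₂| * |θ₁ - θ₂| := by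
        gcongr
        exact norm_exp_I_mul_ofReal_sub_one_le

lemma sqrt_sub_sqrt_le_div {a b : ℝ} (ha : 0 < a) (hb : 0 ≤ b) :
    √b - √a ≤ (b - a) / (2 * √a) := by
  rw [le_div_iff₀ (by positivity)]
  nlinarith [sq_nonneg (√b - √a), sq_sqrt ha.le, sq_sqrt hb]

lemma nearestIntDist_nonneg (x : ℝ) : 0 ≤ nearestIntDist x :=
  abs_nonneg _

lemma nearestIntDist_le_half (x : ℝ) : nearestIntDist x ≤ 1 / 2 :=
  abs_sub_round x

lemma sqrt_ceil_mul_nearestIntDist_lt {x k s : ℝ} (hk : 1 ≤ k) (hs : 0 < s)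
    (hx : nearestIntDist x < s ^ 2 / k) :
    √⌈(k / s) ^ 2⌉₊ * nearestIntDist x < √(3 / 2) * s := by
  set d := nearestIntDist x
  have hd : 0 ≤ d := nearestIntDist_nonneg x
  have hkd : k * d < s ^ 2 := (lt_div_iff₀' (by positivity)).1 hx
  have hkd_div : k / s * d < s := by
    rw [div_mul_eq_mul_div, div_lt_iff₀ hs]
    linarith
  have hd_sq : d ^ 2 < s ^ 2 / 2 := by
    nlinarith [nearestIntDist_le_half x, le_mul_of_one_le_left hd hk]
  have hceil : (⌈(k / s) ^ 2⌉₊ : ℝ) ≤ (k / s) ^ 2 + 1 := (Nat.ceil_lt_add_one (by positivity)).le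
  refine lt_of_pow_lt_pow_left₀ 2 (by positivity) ?_
  calc (√⌈(k / s) ^ 2⌉₊ * d) ^ 2 = ⌈(k / s) ^ 2⌉₊ * d ^ 2 := by
        rw [mul_pow, sq_sqrt (Nat.cast_nonneg _)]
    _ ≤ ((k / s) ^ 2 + 1) * d ^ 2 := by gcongr
    _ = (k / s * d) ^ 2 + d ^ 2 := by ring
    _ < s ^ 2 + s ^ 2 / 2 := by gcongr
    _ = (√(3 / 2) * s) ^ 2 := by
        rw [mul_pow, sq_sqrt (by norm_num)]
        ring

/-- The `n`-th point `√n·e^{2πi n α}` of `fermatSpiral α`, written exactly as in that set. Indexing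
the points lets distinctness and distances be read off from the indices. -/
noncomputable def spiralPoint (α : ℝ) (n : ℕ) : ℂ :=
  √n * Complex.exp (2 * π * Complex.I * (n * α))

lemma spiralPoint_mem_fermatSpiral (α : ℝ) (n : ℕ) : spiralPoint α n ∈ fermatSpiral α :=
  ⟨n, rfl⟩

lemma spiralPoint_eq_polar (α : ℝ) (n : ℕ) (m : ℤ) :
    spiralPoint α n = √n * Complex.exp ((2 * π * (n * α - m) : ℝ) * Complex.I) := by
  rw [spiralPoint, ← Complex.exp_periodic.sub_int_mul_eq m]
  congr 2
  push_cast
  ring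

lemma norm_spiralPoint (α : ℝ) (n : ℕ) : ‖spiralPoint α n‖ = √n := by
  rw [spiralPoint_eq_polar α n 0, norm_mul, Complex.norm_exp_ofReal_mul_I, mul_one,
    Complex.norm_of_nonneg (sqrt_nonneg _)]

lemma spiralPoint_injective (α : ℝ) : Function.Injective (spiralPoint α) := fun m n h ↦ by
  have hnorm : √(m : ℝ) = √n := by rw [← norm_spiralPoint α, h, norm_spiralPoint]
  exact_mod_cast (sqrt_inj m.cast_nonneg n.cast_nonneg).1 hnorm

lemma dist_spiralPoint_add_le (α : ℝ) {n : ℕ} (hn : 0 < n) (k : ℕ) :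
    dist (spiralPoint α (n + k)) (spiralPoint α n) ≤
      k / (2 * √n) + 2 * π * (√n * nearestIntDist (k * α)) := by
  have hradial : |√((n + k : ℕ) : ℝ) - √n| ≤ k / (2 * √n) := by
    rw [abs_of_nonneg (sub_nonneg.2 (sqrt_le_sqrt (by simp)))]
    refine (sqrt_sub_sqrt_le_div (by positivity) (by positivity)).trans_eq ?_
    rw [Nat.cast_add, add_sub_cancel_left]
  have hangular : |2 * π * ((n + k : ℕ) * α - round (k * α)) - 2 * π * (n * α - (0 : ℤ))| =
      2 * π * nearestIntDist (k * α) := by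
    rw [← mul_sub, abs_mul, abs_of_pos two_pi_pos, nearestIntDist]
    congr 2
    push_cast
    ring
  rw [dist_eq_norm, spiralPoint_eq_polar α (n + k) (round (k * α)), spiralPoint_eq_polar α n 0]
  calc _ ≤ |√((n + k : ℕ) : ℝ) - √n| + |√(n : ℝ)| * _ := norm_mul_exp_mul_I_sub_le _ _ _ _
    _ = |√((n + k : ℕ) : ℝ) - √n| + 2 * π * (√n * nearestIntDist (k * α)) := by
        rw [hangular, abs_of_nonneg (sqrt_nonneg _)]
        ring
    _ ≤ _ := by gcongr

lemma dist_spiralPoint_ceil_add_lt {α s : ℝ} {k : ℕ} (hs : 0 < s) (hk : 1 ≤ k)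
    (hkα : nearestIntDist (k * α) < s ^ 2 / k) :
    dist (spiralPoint α (⌈(k / s) ^ 2⌉₊ + k)) (spiralPoint α ⌈(k / s) ^ 2⌉₊) <
      2 * ((1 / 4 + π * √(3 / 2)) * s) := by
  set n := ⌈(k / s) ^ 2⌉₊
  have hn : 0 < n := Nat.ceil_pos.2 (by positivity)
  have hsqrt : k / s ≤ √n := le_sqrt_of_sq_le (Nat.le_ceil _)
  have hradial : k / (2 * √n) ≤ s / 2 := by
    rw [div_le_iff₀ (by positivity)]
    linarith [(div_le_iff₀ hs).1 hsqrt]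
  have hangular : √n * nearestIntDist (k * α) < √(3 / 2) * s :=
    sqrt_ceil_mul_nearestIntDist_lt (by exact_mod_cast hk) hs hkα
  calc _ ≤ k / (2 * √n) + 2 * π * (√n * nearestIntDist (k * α)) := dist_spiralPoint_add_le α hn k
    _ < s / 2 + 2 * π * (√(3 / 2) * s) :=
        add_lt_add_of_le_of_lt hradial (by gcongr)
    _ = _ := by ring

theorem not_uniformly_discrete_of_small_denominator_general (α : ℝ) {s : ℝ} (hs : 0 < s)
    (hk : ∃ k : ℕ, 1 ≤ k ∧ nearestIntDist ((k : ℝ) * α) < s ^ 2 / (k : ℝ)) :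
    ∃ x : ℂ, ∃ z ∈ fermatSpiral α, ∃ w ∈ fermatSpiral α, z ≠ w ∧
      z ∈ Metric.ball x ((1 / 4 + π * √(3 / 2)) * s) ∧
      w ∈ Metric.ball x ((1 / 4 + π * √(3 / 2)) * s) := by
  obtain ⟨k, hk1, hkα⟩ := hk
  have hdist := dist_spiralPoint_ceil_add_lt hs hk1 hkα
  set n := ⌈(k / s) ^ 2⌉₊
  have hradius : 0 < (1 / 4 + π * √(3 / 2)) * s := by positivity
  rw [two_mul] at hdist
  obtain ⟨x, hzx, hxw⟩ := exists_dist_lt_lt hradius hradius hdist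
  exact ⟨x, spiralPoint α (n + k), spiralPoint_mem_fermatSpiral α _,
    spiralPoint α n, spiralPoint_mem_fermatSpiral α _,
    (spiralPoint_injective α).ne (by lia), hzx, Metric.mem_ball'.2 hxw⟩

/-- Let `α ∈ [0,1)` be irrational and `0 < s < 2`.  If there is an
integer `k ≥ 1` with `‖kα‖ < s²/k`, then `X(√t, α)` is not
`(1/4 + π√5)·s`-uniformly discrete: two distinct points of `X(√t, α)` lie in a
common open ball of radius `(1/4 + π√5)·s`. -/
theorem not_uniformly_discrete_of_small_denominator
    (α : ℝ) (hα : α ∈ Set.Ico (0 : ℝ) 1) (hirr : Irrational α)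
    (s : ℝ) (hs0 : 0 < s) (hs2 : s < 2)
    (hk : ∃ k : ℕ, 1 ≤ k ∧ nearestIntDist ((k : ℝ) * α) < s ^ 2 / (k : ℝ)) :
    ∃ x : ℂ, ∃ z ∈ fermatSpiral α, ∃ w ∈ fermatSpiral α, z ≠ w ∧
      z ∈ Metric.ball x ((1 / 4 + Real.pi * Real.sqrt 5) * s) ∧
      w ∈ Metric.ball x ((1 / 4 + Real.pi * Real.sqrt 5) * s) := by
  obtain ⟨x, z, hz, w, hw, hzw, hzx, hwx⟩ :=
    not_uniformly_discrete_of_small_denominator_general α hs0 hk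
  have hball := Metric.ball_subset_ball (x := x)
    (show (1 / 4 + π * √(3 / 2)) * s ≤ (1 / 4 + π * √5) * s by gcongr; norm_num)
  exact ⟨x, z, hz, w, hw, hzw, hball hzx, hball hwx⟩
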